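/- arXiv:2306.17402 — 2 statements merged into one kernel-verified Lean document; each statement's English description precedes it below -/
import Mathlib

section
/- For every integer n ≥ 2, the multiset consisting of n copies of n together with n² − 2 copies of n² satisfies ν = 0. Moreover, the ratio (n² − n)/(n² + n − 2) of the largest gap between consecutive distinct values to the length of this multiset tends to 1 as n → ∞; hence for every ε > 0 there is such a multiset of positive integers with ν = 0 for which this ratio exceeds 1 − ε. -/
/-!
The sum of the multiset is `n² + (n² - 2) n² = n² (n² - 1)`, and the sum of its cubes is
`n⁴ + (n² - 2) n⁶ = n⁴ (n² - 1)²`, so `ν = 0`. The ratio `n (n - 1) / ((n - 1) (n + 2))` equals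
`1 - 2 / (n + 2)` for `n ≥ 2`, hence tends to `1`; values of the ratio near `1` come from the limit.
-/

/-- ν of a finite multiset of integers. -/
def nu (σ : Multiset ℤ) : ℤ := σ.sum ^ 2 - (σ.map (fun x => x ^ 3)).sum

lemma nu_replicate_eq_zero (n : ℕ) (hn : 2 ≤ n) :
    nu (Multiset.replicate n (n : ℤ) + Multiset.replicate (n ^ 2 - 2) ((n : ℤ) ^ 2)) = 0 := by
  have h : 2 ≤ n ^ 2 := by nlinarith
  simp only [nu, Multiset.sum_add, Multiset.map_add, Multiset.map_replicate,
    Multiset.sum_replicate, nsmul_eq_mul]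
  push_cast [Nat.cast_sub h]
  ring

lemma tendsto_gap_ratio :
    Filter.Tendsto (fun n : ℕ => ((n : ℝ) ^ 2 - (n : ℝ)) / ((n : ℝ) ^ 2 + (n : ℝ) - 2))
      Filter.atTop (nhds 1) := by
  have h : Filter.Tendsto (fun n : ℕ => 1 - 2 / ((n : ℝ) + 2)) Filter.atTop (nhds (1 - 0)) :=
    tendsto_const_nhds.sub (tendsto_const_nhds.div_atTop
      (Filter.tendsto_atTop_add_const_right _ _ tendsto_natCast_atTop_atTop))
  rw [sub_zero] at h
  refine h.congr' ?_
  filter_upwards [Filter.eventually_ge_atTop 2] with n hn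
  have hn' : (2 : ℝ) ≤ n := by exact_mod_cast hn
  have h₁ : (n : ℝ) + 2 ≠ 0 := by positivity
  have h₂ : (n : ℝ) ^ 2 + n - 2 ≠ 0 := by nlinarith
  rw [eq_div_iff h₂]
  field_simp
  ring

/-- n copies of n together with n²−2 copies of n² has ν = 0; the gap/length ratio
(n²−n)/(n²+n−2) tends to 1, so it exceeds 1 − ε for suitable n. -/
theorem stmt_10 :
    (∀ n : ℕ, 2 ≤ n →
      nu (Multiset.replicate n (n : ℤ) + Multiset.replicate (n ^ 2 - 2) ((n : ℤ) ^ 2)) = 0) ∧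
    Filter.Tendsto (fun n : ℕ => ((n : ℝ) ^ 2 - (n : ℝ)) / ((n : ℝ) ^ 2 + (n : ℝ) - 2))
      Filter.atTop (nhds 1) ∧
    (∀ ε : ℝ, 0 < ε → ∃ n : ℕ, 2 ≤ n ∧
      nu (Multiset.replicate n (n : ℤ) + Multiset.replicate (n ^ 2 - 2) ((n : ℤ) ^ 2)) = 0 ∧
      1 - ε < ((n : ℝ) ^ 2 - (n : ℝ)) / ((n : ℝ) ^ 2 + (n : ℝ) - 2)) := by
  refine ⟨nu_replicate_eq_zero, tendsto_gap_ratio, fun ε hε => ?_⟩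
  obtain ⟨n, hn, hlt⟩ := ((Filter.eventually_ge_atTop 2).and
    (tendsto_gap_ratio.eventually_const_lt (sub_lt_self 1 hε))).exists
  exact ⟨n, hn, nu_replicate_eq_zero n hn, hlt⟩
end

section
/- Let j and m be positive integers and let σ be the multiset {1, 2, …, j, j+1} together with 2j copies of m. Then ν(σ) = 0 if and only if m² = 2jm + (j+1)(j+2), equivalently if and only if m = j + √(2j² + 3j + 2). -/
theorem multiset_Icc_one_succ (n : ℕ) :
    Multiset.Icc 1 (n + 1) = (n + 1) ::ₘ Multiset.Icc 1 n := by
  have h := Finset.insert_Icc_right_eq_Icc_add_one (a := 1) (b := n) (by omega)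
  have h2 := congrArg Finset.val h
  rw [Finset.insert_val_of_notMem (by simp)] at h2
  exact h2.symm

theorem two_mul_sum_Icc (n : ℕ) :
    2 * ((Multiset.Icc 1 n).map (fun i : ℕ => (i : ℤ))).sum = (n : ℤ) * (n + 1) := by
  induction n with
  | zero => simp
  | succ k ih =>
    rw [multiset_Icc_one_succ, Multiset.map_cons, Multiset.sum_cons, mul_add, ih]
    push_cast
    ring

/-- Nicomachus' identity: the sum of the first `n` cubes is the square of the sum of
`1, …, n`. -/
theorem sum_cubes_Icc (n : ℕ) :
    ((Multiset.Icc 1 n).map (fun i : ℕ => (i : ℤ) ^ 3)).sum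
      = ((Multiset.Icc 1 n).map (fun i : ℕ => (i : ℤ))).sum ^ 2 := by
  induction n with
  | zero => simp
  | succ k ih =>
    rw [multiset_Icc_one_succ, Multiset.map_cons, Multiset.sum_cons, Multiset.map_cons,
      Multiset.sum_cons, ih]
    have h := two_mul_sum_Icc k
    push_cast
    linear_combination (-(k : ℤ) - 1) * h

theorem nu_eq (j m : ℕ) :
    nu ((Multiset.Icc 1 (j + 1)).map (fun i : ℕ => (i : ℤ))
        + Multiset.replicate (2 * j) (m : ℤ))
      = 2 * (j : ℤ) * m * (2 * (j : ℤ) * m + ((j : ℤ) + 1) * ((j : ℤ) + 2) - (m : ℤ) ^ 2) := by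
  have h1 := two_mul_sum_Icc (j + 1)
  have h2 := sum_cubes_Icc (j + 1)
  simp only [nu, Multiset.map_add, Multiset.sum_add, Multiset.map_map, Function.comp_def,
    Multiset.map_replicate, Multiset.sum_replicate, nsmul_eq_mul]
  rw [h2]
  push_cast at h1 ⊢
  linear_combination (2 * (j : ℤ) * m) * h1

/-- For σ = {1, …, j+1} together with 2j copies of m: ν(σ) = 0 iff
m² = 2jm + (j+1)(j+2), iff m = j + √(2j² + 3j + 2). -/
theorem stmt_11 (j m : ℕ) (hj : 0 < j) (hm : 0 < m) :
    (nu ((Multiset.Icc 1 (j + 1)).map (fun i => (i : ℤ))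
          + Multiset.replicate (2 * j) (m : ℤ)) = 0
      ↔ (m : ℤ) ^ 2 = 2 * (j : ℤ) * m + ((j : ℤ) + 1) * ((j : ℤ) + 2)) ∧
    ((m : ℤ) ^ 2 = 2 * (j : ℤ) * m + ((j : ℤ) + 1) * ((j : ℤ) + 2)
      ↔ (m : ℝ) = (j : ℝ) + Real.sqrt (2 * (j : ℝ) ^ 2 + 3 * (j : ℝ) + 2)) := by
  have hj' : (0 : ℤ) < j := by exact_mod_cast hj
  have hm' : (0 : ℤ) < m := by exact_mod_cast hm
  refine ⟨?_, ?_⟩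
  · -- The outer `Multiset.map` acts on integers: the natural-number interval is coerced to a
    -- multiset of integers by a monadic lift, which `hcoe` turns back into a plain `map`.
    have hcoe : (Multiset.map (fun i : ℤ => i) (do
          let a ← Multiset.Icc 1 (j + 1)
          pure (a : ℤ)))
        = (Multiset.Icc 1 (j + 1)).map (fun i : ℕ => (i : ℤ)) := by
      rw [Multiset.map_id']
      exact Multiset.bind_singleton _ _
    erw [hcoe]
    rw [nu_eq, mul_eq_zero, or_iff_right (by positivity), sub_eq_zero, eq_comm]
  · have hD : (0 : ℝ) ≤ 2 * (j : ℝ) ^ 2 + 3 * (j : ℝ) + 2 := by positivity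
    constructor
    · intro h
      -- `m (m - 2j) = (j+1)(j+2) > 0`, which rules out the negative root.
      have hlt : (j : ℤ) ≤ m := by nlinarith
      have hle : (j : ℝ) ≤ m := by exact_mod_cast hlt
      have h' : (m : ℝ) ^ 2 = 2 * (j : ℝ) * m + ((j : ℝ) + 1) * ((j : ℝ) + 2) := by
        exact_mod_cast h
      have hsq : 2 * (j : ℝ) ^ 2 + 3 * (j : ℝ) + 2 = ((m : ℝ) - j) ^ 2 := by
        linear_combination -h'
      rw [hsq, Real.sqrt_sq (sub_nonneg.mpr hle)]
      ring
    · intro h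
      have hs := Real.sq_sqrt hD
      rw [← sub_eq_iff_eq_add'.mpr h] at hs
      have h' : (m : ℝ) ^ 2 = 2 * (j : ℝ) * m + ((j : ℝ) + 1) * ((j : ℝ) + 2) := by
        linear_combination hs
      exact_mod_cast h'
end
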